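/- Let c_n^{−,−} = E_n^sep(A_n^{−,−} | B_1^{+,n}=n), the average of A_n^{−,−}(σ) over indecomposable σ ∈ SEP(n). Then for every real t with |t| < 3 − 2√2, the series G^{−,−}(t) = ∑_{n=1}^∞ s_n c_n^{−,−} t^n converges and G^{−,−}(t) = t(1−t)/√(t² − 6t + 1) − t(1−t)/2 − (t/2)√(t² − 6t + 1). -/

import Mathlib

open Finset Filter Real
open scoped Classical

/-- `σ` contains the pattern `τ` (a permutation of `Fin k` given as a function). -/
def ContainsPattern {n k : ℕ} (σ : Equiv.Perm (Fin n)) (τ : Fin k → Fin k) : Prop :=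
  ∃ f : Fin k → Fin n, StrictMono f ∧ ∀ a b : Fin k, τ a < τ b ↔ σ (f a) < σ (f b)

/-- A permutation is separable iff it avoids the patterns 2413 and 3142. -/
def Separable {n : ℕ} (σ : Equiv.Perm (Fin n)) : Prop :=
  ¬ ContainsPattern σ (![1, 3, 0, 2] : Fin 4 → Fin 4) ∧
  ¬ ContainsPattern σ (![2, 0, 3, 1] : Fin 4 → Fin 4)

/-- The set of separable permutations of `[n]`. -/
noncomputable def SEP (n : ℕ) : Finset (Equiv.Perm (Fin n)) :=
  Finset.univ.filter fun σ => Separable σ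

/-- `IsAltSeq σ s l` : `l` is a strictly increasing list of indices along which the values of `σ`
alternate, starting with an ascent if `s = true` and starting with a descent if `s = false`. -/
def IsAltSeq {n : ℕ} (σ : Equiv.Perm (Fin n)) (s : Bool) (l : List (Fin n)) : Prop :=
  l.Chain' (· < ·) ∧
  ∀ j : ℕ, ∀ hj : j + 1 < l.length,
    if decide (j % 2 = 0) = s then
      σ (l.get ⟨j, Nat.lt_of_succ_lt hj⟩) < σ (l.get ⟨j + 1, hj⟩)
    else
      σ (l.get ⟨j + 1, hj⟩) < σ (l.get ⟨j, Nat.lt_of_succ_lt hj⟩)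

/-- The length of the longest alternating subsequence of `σ` of type `(s, e)`, where
`true` stands for ascent and `false` for descent.  An alternating subsequence starting with
an ascent ends with a descent iff its length is odd (and similarly in the other cases), so the
type is encoded by the parity constraint; a singleton counts as a subsequence of types
`(+,-)` and `(-,+)` but not of types `(+,+)` and `(-,-)`. -/
noncomputable def altTypeLen {n : ℕ} (σ : Equiv.Perm (Fin n)) (s e : Bool) : ℕ :=
  sSup {k | ∃ l : List (Fin n), IsAltSeq σ s l ∧ l.length = k ∧
    k % 2 = (if s = e then 0 else 1)}

/-- The length `Aₙ(σ)` of the longest alternating subsequence of `σ`. -/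
noncomputable def altLen {n : ℕ} (σ : Equiv.Perm (Fin n)) : ℕ :=
  sSup {k | ∃ l : List (Fin n), (IsAltSeq σ true l ∨ IsAltSeq σ false l) ∧
    l.length = k ∧ 1 ≤ k}

/-- Expectation with respect to the uniform probability measure on `SEP n`. -/
noncomputable def sepExp (n : ℕ) (f : Equiv.Perm (Fin n) → ℝ) : ℝ :=
  (∑ σ ∈ SEP n, f σ) / (SEP n).card

/-- Variance with respect to the uniform probability measure on `SEP n`. -/
noncomputable def sepVar (n : ℕ) (f : Equiv.Perm (Fin n) → ℝ) : ℝ :=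
  sepExp n (fun σ => (f σ - sepExp n f) ^ 2)

/-- `B₁^{+,n}(σ)`: the length of the first indecomposable block (0-indexed positions). -/
noncomputable def Bplus {n : ℕ} (σ : Equiv.Perm (Fin n)) : ℕ :=
  sInf {j | 1 ≤ j ∧ ∀ i : Fin n, (i : ℕ) < j → (σ i : ℕ) < j}

/-- `B₁^{-,n}(σ)`: the length of the first skew indecomposable block (0-indexed positions). -/
noncomputable def Bminus {n : ℕ} (σ : Equiv.Perm (Fin n)) : ℕ :=
  sInf {j | 1 ≤ j ∧ ∀ i : Fin n, (i : ℕ) < j → n - j ≤ (σ i : ℕ)}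

/-- Expectation over indecomposable separable permutations of `[n]`, i.e. the conditional
expectation under the uniform measure on `SEP n` given `{B₁^{+,n} = n}`. -/
noncomputable def indecExp (n : ℕ) (f : Equiv.Perm (Fin n) → ℝ) : ℝ :=
  (∑ σ ∈ (SEP n).filter (fun σ => Bplus σ = n), f σ) /
    ((SEP n).filter (fun σ => Bplus σ = n)).card

/-- `Desc σ i`: position `i` is a descent of `σ`. -/
def Desc {n : ℕ} (σ : Equiv.Perm (Fin n)) (i : ℕ) : Prop :=
  ∃ h : i + 1 < n, σ ⟨i + 1, h⟩ < σ ⟨i, Nat.lt_of_succ_lt h⟩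

/-- `Asc σ i`: position `i` is an ascent of `σ`. -/
def Asc {n : ℕ} (σ : Equiv.Perm (Fin n)) (i : ℕ) : Prop :=
  ∃ h : i + 1 < n, σ ⟨i, Nat.lt_of_succ_lt h⟩ < σ ⟨i + 1, h⟩

/-- The number of maximal runs of consecutive integers satisfying `D` which start below `n`. -/
noncomputable def runs (D : ℕ → Prop) (n : ℕ) : ℕ :=
  ∑ i ∈ range n, if D i ∧ (i = 0 ∨ ¬ D (i - 1)) then 1 else 0

lemma runs_succ (D : ℕ → Prop) (n : ℕ) :
    runs D (n + 1) = runs D n + if D n ∧ (n = 0 ∨ ¬ D (n - 1)) then 1 else 0 :=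
  sum_range_succ _ _

lemma runs_mono (D : ℕ → Prop) : Monotone (runs D) :=
  monotone_nat_of_le_succ fun n => by rw [runs_succ]; omega

lemma runs_le (D : ℕ → Prop) (n : ℕ) : runs D n ≤ n := by
  induction n with
  | zero => simp [runs]
  | succ n ih => rw [runs_succ]; split_ifs <;> omega

lemma exists_run_start {D : ℕ → Prop} {f : ℕ} (hf : D f) :
    ∃ i ≤ f, (D i ∧ (i = 0 ∨ ¬ D (i - 1))) ∧ ∀ e < f, ¬ D e → e < i := by
  induction f with
  | zero => exact ⟨0, le_rfl, ⟨hf, Or.inl rfl⟩, by omega⟩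
  | succ f ih =>
    by_cases h : D f
    · obtain ⟨i, hi, hD, he⟩ := ih h
      refine ⟨i, by omega, hD, fun e hef hne => he e ?_ hne⟩
      rcases Nat.lt_succ_iff_lt_or_eq.1 hef with h1 | rfl
      · exact h1
      · exact absurd h hne
    · exact ⟨f + 1, le_rfl, ⟨hf, Or.inr h⟩, fun e he _ => he⟩

lemma runs_lt_of_start {D : ℕ → Prop} {i c b : ℕ} (hi : D i ∧ (i = 0 ∨ ¬ D (i - 1)))
    (hc : c ≤ i) (hb : i < b) : runs D c + 1 ≤ runs D b := by
  have h1 : runs D (i + 1) = runs D i + 1 := by rw [runs_succ, if_pos hi]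
  have h2 := runs_mono D hc
  have h3 := runs_mono D (show i + 1 ≤ b from hb)
  omega

/-- The values of `σ` as a function on the natural numbers. -/
def permVal {n : ℕ} (σ : Equiv.Perm (Fin n)) (i : ℕ) : ℕ :=
  if h : i < n then σ ⟨i, h⟩ else 0

lemma permVal_eq {n : ℕ} (σ : Equiv.Perm (Fin n)) {i : ℕ} (h : i < n) :
    permVal σ i = σ ⟨i, h⟩ := dif_pos h

lemma permVal_inj {n : ℕ} (σ : Equiv.Perm (Fin n)) {i j : ℕ} (hi : i < n) (hj : j < n)
    (h : permVal σ i = permVal σ j) : i = j := by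
  rw [permVal_eq σ hi, permVal_eq σ hj] at h
  simpa using σ.injective (Fin.ext h)

lemma desc_iff {n : ℕ} (σ : Equiv.Perm (Fin n)) (i : ℕ) :
    Desc σ i ↔ i + 1 < n ∧ permVal σ (i + 1) < permVal σ i := by
  constructor
  · rintro ⟨h, h'⟩
    exact ⟨h, by rw [permVal_eq σ h, permVal_eq σ (Nat.lt_of_succ_lt h)]; exact h'⟩
  · rintro ⟨h, h'⟩
    rw [permVal_eq σ h, permVal_eq σ (Nat.lt_of_succ_lt h)] at h'
    exact ⟨h, h'⟩

lemma asc_iff {n : ℕ} (σ : Equiv.Perm (Fin n)) (i : ℕ) :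
    Asc σ i ↔ i + 1 < n ∧ permVal σ i < permVal σ (i + 1) := by
  constructor
  · rintro ⟨h, h'⟩
    exact ⟨h, by rw [permVal_eq σ h, permVal_eq σ (Nat.lt_of_succ_lt h)]; exact h'⟩
  · rintro ⟨h, h'⟩
    rw [permVal_eq σ h, permVal_eq σ (Nat.lt_of_succ_lt h)] at h'
    exact ⟨h, h'⟩

lemma asc_iff_not_desc {n : ℕ} (σ : Equiv.Perm (Fin n)) {i : ℕ} (h : i + 1 < n) :
    Asc σ i ↔ ¬ Desc σ i := by
  rw [asc_iff, desc_iff]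
  have : permVal σ i ≠ permVal σ (i + 1) := fun h' => by
    have := permVal_inj σ (by omega) h h'
    omega
  omega

lemma exists_desc_of_lt {n : ℕ} (σ : Equiv.Perm (Fin n)) {a b : ℕ} (hab : a < b) (hb : b < n)
    (h : permVal σ b < permVal σ a) : ∃ f, a ≤ f ∧ f < b ∧ Desc σ f := by
  by_contra! hc
  have : ∀ m, a + m ≤ b → permVal σ a ≤ permVal σ (a + m) := by
    intro m
    induction m with
    | zero => simp
    | succ m ih =>
      intro hm
      have h1 := hc (a + m) (by omega) (by omega)
      rw [desc_iff] at h1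
      have := ih (by omega)
      rw [← add_assoc]
      omega
  have := this (b - a) (by omega)
  rw [show a + (b - a) = b by omega] at this
  omega

lemma exists_not_desc_of_lt {n : ℕ} (σ : Equiv.Perm (Fin n)) {a b : ℕ} (hab : a < b)
    (h : permVal σ a < permVal σ b) : ∃ f, a ≤ f ∧ f < b ∧ ¬ Desc σ f := by
  by_contra! hc
  have : ∀ m, a + m ≤ b → permVal σ (a + m) ≤ permVal σ a := by
    intro m
    induction m with
    | zero => simp
    | succ m ih =>
      intro hm
      have h1 := hc (a + m) (by omega) (by omega)
      rw [desc_iff] at h1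
      have := ih (by omega)
      rw [← add_assoc]
      omega
  have := this (b - a) (by omega)
  rw [show a + (b - a) = b by omega] at this
  omega

/-- `g 0, …, g (k - 1)` are increasing positions along which `σ` alternates, starting with a
descent. -/
def AltFun {n : ℕ} (σ : Equiv.Perm (Fin n)) (k : ℕ) (g : ℕ → ℕ) : Prop :=
  (∀ j < k, g j < n) ∧ ∀ j, j + 1 < k → g j < g (j + 1) ∧
    (j % 2 = 0 → permVal σ (g (j + 1)) < permVal σ (g j)) ∧
    (j % 2 = 1 → permVal σ (g j) < permVal σ (g (j + 1)))

lemma exists_isAltSeq_iff {n : ℕ} (σ : Equiv.Perm (Fin n)) (k : ℕ) :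
    (∃ l : List (Fin n), IsAltSeq σ false l ∧ l.length = k) ↔ ∃ g, AltFun σ k g := by
  constructor
  · rintro ⟨l, ⟨hc, ha⟩, rfl⟩
    have key : ∀ j (hj : j < l.length),
        (if h : j < l.length then (l.get ⟨j, h⟩ : ℕ) else 0) = l.get ⟨j, hj⟩ :=
      fun j hj => dif_pos hj
    refine ⟨fun j => if h : j < l.length then (l.get ⟨j, h⟩ : ℕ) else 0, ?_, ?_⟩
    · intro j hj
      simp only [key j hj]
      exact (l.get ⟨j, hj⟩).2
    · intro j hj
      have hj' : j < l.length := by omega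
      have h2 := ha j hj
      simp only [key j hj', key (j + 1) hj, permVal, Fin.is_lt, dite_true, Fin.eta]
      refine ⟨?_, fun h0 => ?_, fun h1 => ?_⟩
      · have := List.isChain_iff_getElem.1 hc j hj
        simpa using this
      · simpa [h0] using h2
      · simpa [h1] using h2
  · rintro ⟨g, hg, ha⟩
    refine ⟨List.ofFn fun j : Fin k => (⟨g j, hg j j.2⟩ : Fin n), ⟨?_, ?_⟩, by simp⟩
    · refine List.isChain_iff_getElem.2 fun j hj => ?_
      simp only [List.length_ofFn] at hj
      simpa using (ha j hj).1
    · intro j hj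
      have hj' : j + 1 < k := by simpa using hj
      obtain ⟨-, h0, h1⟩ := ha j hj'
      rw [permVal_eq σ (hg j (by omega)), permVal_eq σ (hg (j + 1) hj')] at h0 h1
      rcases Nat.mod_two_eq_zero_or_one j with h | h
      · simpa [h] using h0 h
      · simpa [h] using h1 h

lemma AltFun.le_runs {n : ℕ} {σ : Equiv.Perm (Fin n)} {k : ℕ} {g : ℕ → ℕ}
    (h : AltFun σ k g) (m : ℕ) (hm : 2 * m + 1 < k) :
    m + 1 ≤ runs (Desc σ) (g (2 * m + 1)) := by
  obtain ⟨hg, ha⟩ := h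
  induction m with
  | zero =>
    obtain ⟨h1, h2, -⟩ := ha 0 (by omega)
    obtain ⟨f, -, hf, hD⟩ := exists_desc_of_lt σ h1 (hg _ (by omega)) (h2 rfl)
    obtain ⟨i, hi, hs, -⟩ := exists_run_start hD
    have := runs_lt_of_start hs (Nat.zero_le i) (lt_of_le_of_lt hi hf)
    simp only [zero_add, mul_zero] at *
    omega
  | succ m ih =>
    have ih := ih (by omega)
    obtain ⟨h1, -, h2⟩ := ha (2 * m + 1) (by omega)
    obtain ⟨h3, h4, -⟩ := ha (2 * m + 1 + 1) (by omega)
    obtain ⟨e, he, he', hne⟩ := exists_not_desc_of_lt σ h1 (h2 (by omega))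
    obtain ⟨f, hf, hf', hD⟩ := exists_desc_of_lt σ h3 (hg _ (by omega)) (h4 (by omega))
    obtain ⟨i, hi, hs, hlt⟩ := exists_run_start hD
    have hei := hlt e (by omega) hne
    have := runs_lt_of_start hs (show g (2 * m + 1) ≤ i by omega) (lt_of_le_of_lt hi hf')
    rw [show 2 * (m + 1) + 1 = 2 * m + 1 + 1 + 1 by ring]
    omega

lemma AltFun.update {n : ℕ} {σ : Equiv.Perm (Fin n)} {k : ℕ} {g : ℕ → ℕ} {x : ℕ}
    (h : AltFun σ k g) (hx : x < n) (h1 : ∀ j, j + 1 = k → g j < x ∧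
      (j % 2 = 0 → permVal σ x < permVal σ (g j)) ∧
      (j % 2 = 1 → permVal σ (g j) < permVal σ x)) :
    AltFun σ (k + 1) (Function.update g k x) := by
  obtain ⟨hg, ha⟩ := h
  refine ⟨fun j hj => ?_, fun j hj => ?_⟩
  · by_cases hjk : j = k
    · simpa [hjk] using hx
    · simpa [hjk] using hg j (by omega)
  · have hjk : j ≠ k := by omega
    by_cases hjk' : j + 1 = k
    · rw [Function.update_of_ne hjk, hjk', Function.update_self]
      exact h1 j hjk'
    · rw [Function.update_of_ne hjk, Function.update_of_ne hjk']
      exact ha j (by omega)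

lemma AltFun.mono {n : ℕ} {σ : Equiv.Perm (Fin n)} {k k' : ℕ} {g : ℕ → ℕ}
    (h : AltFun σ k g) (hk : k' ≤ k) : AltFun σ k' g :=
  ⟨fun j hj => h.1 j (by omega), fun j hj => h.2 j (by omega)⟩

lemma exists_altFun {n : ℕ} (σ : Equiv.Perm (Fin n)) (x : ℕ) (hx : x < n) :
    ∃ k g, AltFun σ (k + 1) g ∧ g k = x ∧
      2 * runs (Desc σ) x = k + if x ≠ 0 ∧ Desc σ (x - 1) then 1 else 0 := by
  induction x with
  | zero =>
    exact ⟨0, fun _ => 0, ⟨fun _ _ => hx, fun j hj => by omega⟩, rfl, by simp [runs]⟩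
  | succ x ih =>
    obtain ⟨k, g, hA, hgk, hr⟩ := ih (by omega)
    have hd := desc_iff σ x
    have hne : permVal σ x ≠ permVal σ (x + 1) := fun h' => by
      have := permVal_inj σ (by omega) hx h'
      omega
    have hs := runs_succ (Desc σ) x
    have hrep : (k % 2 = 1 ↔ Desc σ x) →
        AltFun σ (k + 1) (Function.update g k (x + 1)) := by
      intro hk
      refine (hA.mono (Nat.le_succ k)).update hx fun j hj => ?_
      obtain ⟨h1, h2, h3⟩ := hA.2 j (by omega)
      rw [hj, hgk] at h1 h2 h3
      by_cases hD : Desc σ x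
      · have := hk.2 hD
        have := hd.1 hD
        exact ⟨by omega, fun h0 => by have := h2 h0; omega, by omega⟩
      · have := mt hk.1 hD
        have : permVal σ x < permVal σ (x + 1) := by
          by_contra hcon
          exact hD (hd.2 ⟨hx, by omega⟩)
        exact ⟨by omega, by omega, fun h0 => by have := h3 h0; omega⟩
    have happ : (k % 2 = 0 ↔ Desc σ x) →
        AltFun σ (k + 1 + 1) (Function.update g (k + 1) (x + 1)) := by
      intro hk
      refine hA.update hx fun j hj => ?_
      obtain rfl : j = k := by omega
      rw [hgk]
      by_cases hD : Desc σ x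
      · have := hk.2 hD
        have := hd.1 hD
        exact ⟨by omega, by omega, by omega⟩
      · have := mt hk.1 hD
        have : permVal σ x < permVal σ (x + 1) := by
          by_contra hcon
          exact hD (hd.2 ⟨hx, by omega⟩)
        exact ⟨by omega, by omega, by omega⟩
    by_cases hD : Desc σ x <;> by_cases hD' : x ≠ 0 ∧ Desc σ (x - 1)
    · have hp : ¬ (Desc σ x ∧ (x = 0 ∨ ¬ Desc σ (x - 1))) := by tauto
      rw [if_pos hD'] at hr
      rw [if_neg hp] at hs
      refine ⟨k, _, hrep (iff_of_true (by omega) hD), by simp, ?_⟩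
      simp only [Nat.add_sub_cancel]
      rw [if_pos ⟨by omega, hD⟩]
      omega
    · have hp : Desc σ x ∧ (x = 0 ∨ ¬ Desc σ (x - 1)) := by tauto
      rw [if_neg hD'] at hr
      rw [if_pos hp] at hs
      refine ⟨k + 1, _, happ (iff_of_true (by omega) hD), by simp, ?_⟩
      simp only [Nat.add_sub_cancel]
      rw [if_pos ⟨by omega, hD⟩]
      omega
    · have hp : ¬ (Desc σ x ∧ (x = 0 ∨ ¬ Desc σ (x - 1))) := by tauto
      rw [if_pos hD'] at hr
      rw [if_neg hp] at hs
      refine ⟨k + 1, _, happ (iff_of_false (by omega) hD), by simp, ?_⟩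
      simp only [Nat.add_sub_cancel]
      rw [if_neg fun h => hD h.2]
      omega
    · have hp : ¬ (Desc σ x ∧ (x = 0 ∨ ¬ Desc σ (x - 1))) := by tauto
      rw [if_neg hD'] at hr
      rw [if_neg hp] at hs
      refine ⟨k, _, hrep (iff_of_false (by omega) hD), by simp, ?_⟩
      simp only [Nat.add_sub_cancel]
      rw [if_neg fun h => hD h.2]
      omega

/-- The longest alternating subsequence of type `(-,-)` has two entries in each maximal
descending run. -/
lemma altTypeLen_false_false {n : ℕ} (hn : 0 < n) (σ : Equiv.Perm (Fin n)) :
    altTypeLen σ false false = 2 * runs (Desc σ) n := by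
  refine IsGreatest.csSup_eq ⟨?_, ?_⟩
  · obtain ⟨k, g, hA, -, hr⟩ := exists_altFun σ (n - 1) (by omega)
    have hlast : runs (Desc σ) n = runs (Desc σ) (n - 1) := by
      obtain ⟨m, rfl⟩ : ∃ m, n = m + 1 := ⟨n - 1, by omega⟩
      rw [runs_succ, if_neg]
      · rfl
      · rintro ⟨⟨h, -⟩, -⟩
        omega
    obtain ⟨l, hl, hlen⟩ := (exists_isAltSeq_iff σ (2 * runs (Desc σ) n)).2
      ⟨g, hA.mono (by split_ifs at hr <;> omega)⟩
    exact ⟨l, hl, hlen, by simp⟩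
  · rintro k ⟨l, hl, hlen, hk⟩
    obtain ⟨g, hg⟩ := (exists_isAltSeq_iff σ k).1 ⟨l, hl, hlen⟩
    simp only [if_true] at hk
    rcases Nat.eq_zero_or_pos k with rfl | hpos
    · omega
    · have h1 := hg.le_runs (k / 2 - 1) (by omega)
      have h2 := runs_mono (Desc σ) (hg.1 (2 * (k / 2 - 1) + 1) (by omega)).le
      omega

/-- The sequence `v 0, …, v (n - 1)` avoids 2413 and 3142. -/
def SepOn {α : Type*} [LinearOrder α] (v : ℕ → α) (n : ℕ) : Prop :=
  (∀ a b c d, a < b → b < c → c < d → d < n → ¬ (v c < v a ∧ v a < v d ∧ v d < v b)) ∧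
  ∀ a b c d, a < b → b < c → c < d → d < n → ¬ (v b < v d ∧ v d < v a ∧ v a < v c)

lemma SepOn.mono {α : Type*} [LinearOrder α] {v : ℕ → α} {n m : ℕ} (h : SepOn v n)
    (hm : m ≤ n) : SepOn v m :=
  ⟨fun a b c d h1 h2 h3 h4 => h.1 a b c d h1 h2 h3 (by omega),
    fun a b c d h1 h2 h3 h4 => h.2 a b c d h1 h2 h3 (by omega)⟩

/-- A cut of `v 0, …, v (m - 1)` at `j`: everything before `j` is smaller than everything after. -/
def IsCut {α : Type*} [LinearOrder α] (v : ℕ → α) (m j : ℕ) : Prop :=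
  0 < j ∧ j < m ∧ ∀ a < j, ∀ b, j ≤ b → b < m → v a < v b

lemma exists_isCut_succ {α : Type*} [LinearOrder α] {v : ℕ → α} {m : ℕ}
    (hs : SepOn v (m + 1)) (hinj : ∀ i < m, v i ≠ v m)
    (ih : ∀ j < m, 2 ≤ j → ∃ i, IsCut v j i ∨ IsCut (OrderDual.toDual ∘ v) j i)
    (hcut : ∃ j, IsCut v m j) :
    ∃ i, IsCut v (m + 1) i ∨ IsCut (OrderDual.toDual ∘ v) (m + 1) i := by
  classical
  set j := Nat.find hcut with hj
  obtain ⟨h0, hjm, hc⟩ : IsCut v m j := Nat.find_spec hcut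
  have hmin : ∀ i < j, ¬ IsCut v m i := fun i hi => Nat.find_min hcut hi
  by_cases habove : ∀ a < j, v a < v m
  · refine ⟨j, Or.inl ⟨h0, by omega, fun a ha b hb hb' => ?_⟩⟩
    rcases Nat.lt_succ_iff_lt_or_eq.1 hb' with h | rfl
    · exact hc a ha b hb h
    · exact habove a ha
  by_cases hbelow : ∀ a < j, v m < v a
  · refine ⟨m, Or.inr ⟨by omega, by omega, fun a ha b hb hb' => ?_⟩⟩
    obtain rfl : b = m := by omega
    change v b < v a
    by_cases haj : a < j
    · exact hbelow a haj
    · exact (hbelow 0 h0).trans (hc 0 h0 a (by omega) ha)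
  exfalso
  push Not at habove hbelow
  obtain ⟨p, hp, hpm⟩ := habove
  obtain ⟨q, hq, hqm⟩ := hbelow
  replace hpm := lt_of_le_of_ne hpm (hinj p (by omega)).symm
  replace hqm := lt_of_le_of_ne hqm (hinj q (by omega))
  have hpq : p ≠ q := fun h => by rw [h] at hpm; exact lt_asymm hpm hqm
  obtain ⟨i, hi⟩ := ih j hjm (by omega)
  rcases hi with ⟨hi0, hij, hi⟩ | ⟨hi0, hij, hi⟩
  · refine hmin i hij ⟨hi0, by omega, fun a ha b hb hb' => ?_⟩
    by_cases hbj : b < j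
    · exact hi a ha b hb hbj
    · exact hc a (by omega) b (by omega) hb'
  · have hi' : ∀ a < i, ∀ b, i ≤ b → b < j → v b < v a := hi
    have hpi : p < i := by
      by_contra hpi
      by_cases hqi : q < i
      · exact lt_asymm (hi' q hqi p (by omega) hp) (hqm.trans hpm)
      · exact hs.2 0 q j m (by omega) hq hjm (by omega)
          ⟨hqm, hpm.trans (hi' 0 hi0 p (by omega) hp), hc 0 h0 j le_rfl hjm⟩
    have hqi : i ≤ q := by
      by_contra hqi
      exact hs.2 p i j m hpi hij hjm (by omega)
        ⟨(hi' q (by omega) i le_rfl hij).trans hqm, hpm, hc p hp j le_rfl hjm⟩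
    exact hs.2 p q j m (by omega) hq hjm (by omega) ⟨hqm, hpm, hc p hp j le_rfl hjm⟩

lemma SepOn.toDual {α : Type*} [LinearOrder α] {v : ℕ → α} {n : ℕ} (h : SepOn v n) :
    SepOn (OrderDual.toDual ∘ v) n :=
  ⟨fun a b c d h1 h2 h3 h4 h' => h.2 a b c d h1 h2 h3 h4 ⟨h'.2.2, h'.2.1, h'.1⟩,
    fun a b c d h1 h2 h3 h4 h' => h.1 a b c d h1 h2 h3 h4 ⟨h'.2.2, h'.2.1, h'.1⟩⟩

/-- A sequence of at least two distinct elements avoiding 2413 and 3142 is sum decomposable or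
skew decomposable. -/
lemma SepOn.exists_isCut {α : Type*} [LinearOrder α] {v : ℕ → α} (n : ℕ) (hn : 2 ≤ n)
    (hs : SepOn v n) (hinj : ∀ i j, i < j → j < n → v i ≠ v j) :
    ∃ i, IsCut v n i ∨ IsCut (OrderDual.toDual ∘ v) n i := by
  induction n using Nat.strong_induction_on with
  | _ n ih =>
    have ih' : ∀ j < n, 2 ≤ j → ∃ i, IsCut v j i ∨ IsCut (OrderDual.toDual ∘ v) j i :=
      fun j hj h2 => ih j hj h2 (hs.mono hj.le) fun a b hab hb => hinj a b hab (by omega)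
    obtain ⟨m, rfl⟩ : ∃ m, n = m + 1 := ⟨n - 1, by omega⟩
    rcases Nat.lt_or_ge m 2 with hm | hm
    · obtain rfl : m = 1 := by omega
      refine ⟨1, ?_⟩
      rcases lt_or_gt_of_ne (hinj 0 1 (by omega) (by omega)) with h | h
      · refine Or.inl ⟨by omega, by omega, fun a ha b hb hb' => ?_⟩
        obtain rfl : a = 0 := by omega
        obtain rfl : b = 1 := by omega
        exact h
      · refine Or.inr ⟨by omega, by omega, fun a ha b hb hb' => ?_⟩
        obtain rfl : a = 0 := by omega
        obtain rfl : b = 1 := by omega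
        exact h
    · obtain ⟨i, hi | hi⟩ := ih' m (by omega) hm
      · exact exists_isCut_succ hs (fun i hi => hinj i m hi (by omega))
          (fun j hj => ih' j (by omega)) ⟨i, hi⟩
      · obtain ⟨a, ha⟩ := exists_isCut_succ hs.toDual (fun i hi => hinj i m hi (by omega))
          (fun j hj h2 => (ih' j (by omega) h2).imp fun a ha => ha.symm) ⟨i, hi⟩
        exact ⟨a, ha.symm⟩

lemma containsPattern_four {n : ℕ} (σ : Equiv.Perm (Fin n)) (τ : Fin 4 → Fin 4) :
    ContainsPattern σ τ ↔ ∃ w : Fin 4 → ℕ, StrictMono w ∧ w 3 < n ∧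
      ∀ a b, τ a < τ b ↔ permVal σ (w a) < permVal σ (w b) := by
  constructor
  · rintro ⟨f, hf, h⟩
    refine ⟨fun i => f i, fun a b hab => hf hab, (f 3).2, fun a b => ?_⟩
    rw [permVal_eq σ (f a).2, permVal_eq σ (f b).2, h]
    rfl
  · rintro ⟨w, hw, hn, h⟩
    have hlt : ∀ i, w i < n := fun i => lt_of_le_of_lt (hw.monotone (Fin.le_last i)) hn
    refine ⟨fun i => ⟨w i, hlt i⟩, fun a b hab => hw hab, fun a b => ?_⟩
    rw [h, permVal_eq σ (hlt a), permVal_eq σ (hlt b)]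
    rfl

lemma separable_iff {n : ℕ} (σ : Equiv.Perm (Fin n)) : Separable σ ↔ SepOn (permVal σ) n := by
  unfold Separable SepOn
  rw [containsPattern_four, containsPattern_four]
  refine and_congr ⟨fun h a b c d h1 h2 h3 h4 h' => h ?_, ?_⟩
    ⟨fun h a b c d h1 h2 h3 h4 h' => h ?_, ?_⟩
  · refine ⟨![a, b, c, d], ?_, h4, ?_⟩
    · rw [Fin.strictMono_iff_lt_succ]
      intro i
      fin_cases i <;> simpa
    · intro i j
      fin_cases i <;> fin_cases j <;> simp <;> omega
  · rintro h ⟨w, hw, hn, hv⟩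
    refine h (w 0) (w 1) (w 2) (w 3) (hw (by decide)) (hw (by decide)) (hw (by decide)) hn
      ⟨(hv 2 0).1 (by decide), (hv 0 3).1 (by decide), (hv 3 1).1 (by decide)⟩
  · refine ⟨![a, b, c, d], ?_, h4, ?_⟩
    · rw [Fin.strictMono_iff_lt_succ]
      intro i
      fin_cases i <;> simpa
    · intro i j
      fin_cases i <;> fin_cases j <;> simp <;> omega
  · rintro h ⟨w, hw, hn, hv⟩
    refine h (w 0) (w 1) (w 2) (w 3) (hw (by decide)) (hw (by decide)) (hw (by decide)) hn
      ⟨(hv 1 3).1 (by decide), (hv 3 0).1 (by decide), (hv 0 2).1 (by decide)⟩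

/-- The direct sum of two permutations. -/
def dsum {k l : ℕ} (τ : Equiv.Perm (Fin k)) (ρ : Equiv.Perm (Fin l)) :
    Equiv.Perm (Fin (k + l)) :=
  finSumFinEquiv.permCongr (Equiv.Perm.sumCongr τ ρ)

lemma permVal_lt {n : ℕ} (σ : Equiv.Perm (Fin n)) {i : ℕ} (h : i < n) : permVal σ i < n := by
  rw [permVal_eq σ h]
  exact (σ _).2

lemma permVal_dsum_left {k l : ℕ} (τ : Equiv.Perm (Fin k)) (ρ : Equiv.Perm (Fin l)) {i : ℕ}
    (h : i < k) : permVal (dsum τ ρ) i = permVal τ i := by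
  rw [permVal_eq _ (show i < k + l by omega), permVal_eq τ h]
  have : (⟨i, by omega⟩ : Fin (k + l)) = finSumFinEquiv (Sum.inl ⟨i, h⟩) := rfl
  rw [this, dsum, Equiv.permCongr_apply, Equiv.symm_apply_apply]
  rfl

lemma permVal_dsum_right {k l : ℕ} (τ : Equiv.Perm (Fin k)) (ρ : Equiv.Perm (Fin l)) {j : ℕ}
    (h : j < l) : permVal (dsum τ ρ) (k + j) = k + permVal ρ j := by
  rw [permVal_eq _ (show k + j < k + l by omega), permVal_eq ρ h]
  have : (⟨k + j, by omega⟩ : Fin (k + l)) = finSumFinEquiv (Sum.inr ⟨j, h⟩) := rfl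
  rw [this, dsum, Equiv.permCongr_apply, Equiv.symm_apply_apply]
  rfl

/-- The complement of a permutation. -/
def complPerm {n : ℕ} (σ : Equiv.Perm (Fin n)) : Equiv.Perm (Fin n) := σ.trans Fin.revPerm

lemma complPerm_complPerm {n : ℕ} (σ : Equiv.Perm (Fin n)) : complPerm (complPerm σ) = σ := by
  ext i
  simp [complPerm]

lemma permVal_complPerm {n : ℕ} (σ : Equiv.Perm (Fin n)) {i : ℕ} (h : i < n) :
    permVal (complPerm σ) i + permVal σ i + 1 = n := by
  rw [permVal_eq _ h, permVal_eq σ h]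
  simp only [complPerm, Equiv.trans_apply, Fin.revPerm_apply, Fin.val_rev]
  have := (σ ⟨i, h⟩).2
  omega

lemma desc_complPerm {n : ℕ} (σ : Equiv.Perm (Fin n)) (i : ℕ) : Desc (complPerm σ) i ↔ Asc σ i := by
  rw [desc_iff, asc_iff]
  refine and_congr_right fun h => ?_
  have := permVal_complPerm σ h
  have := permVal_complPerm σ (show i < n by omega)
  omega

lemma asc_complPerm {n : ℕ} (σ : Equiv.Perm (Fin n)) (i : ℕ) : Asc (complPerm σ) i ↔ Desc σ i := by
  rw [← desc_complPerm, complPerm_complPerm]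

lemma Separable.complPerm {n : ℕ} {σ : Equiv.Perm (Fin n)} (h : Separable σ) :
    Separable (complPerm σ) := by
  rw [separable_iff] at h ⊢
  have hv := fun i (hi : i < n) => permVal_complPerm σ hi
  constructor
  · intro a b c d h1 h2 h3 h4 h'
    have := hv a (by omega)
    have := hv b (by omega)
    have := hv c (by omega)
    have := hv d (by omega)
    exact h.2 a b c d h1 h2 h3 h4 (by omega)
  · intro a b c d h1 h2 h3 h4 h'
    have := hv a (by omega)
    have := hv b (by omega)
    have := hv c (by omega)
    have := hv d (by omega)
    exact h.1 a b c d h1 h2 h3 h4 (by omega)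

lemma separable_dsum {k l : ℕ} (τ : Equiv.Perm (Fin k)) (ρ : Equiv.Perm (Fin l)) :
    Separable (dsum τ ρ) ↔ Separable τ ∧ Separable ρ := by
  simp only [separable_iff]
  have hl : ∀ i < k, permVal (dsum τ ρ) i = permVal τ i := fun i => permVal_dsum_left τ ρ
  have hr : ∀ j < l, permVal (dsum τ ρ) (k + j) = k + permVal ρ j :=
    fun j => permVal_dsum_right τ ρ
  have hlt : ∀ i < k, permVal (dsum τ ρ) i < k := fun i hi => by
    rw [hl i hi]
    exact permVal_lt τ hi
  have hge : ∀ i, k ≤ i → i < k + l → k ≤ permVal (dsum τ ρ) i := fun i hi hi' => by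
    obtain ⟨j, rfl⟩ := Nat.exists_eq_add_of_le hi
    rw [hr j (by omega)]
    omega
  generalize permVal (dsum τ ρ) = v at *
  constructor
  · refine fun h => ⟨⟨?_, ?_⟩, ⟨?_, ?_⟩⟩ <;> intro a b c d h1 h2 h3 h4
    · rw [← hl a (by omega), ← hl b (by omega), ← hl c (by omega), ← hl d (by omega)]
      exact h.1 a b c d h1 h2 h3 (by omega)
    · rw [← hl a (by omega), ← hl b (by omega), ← hl c (by omega), ← hl d (by omega)]
      exact h.2 a b c d h1 h2 h3 (by omega)
    · have := hr a (by omega)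
      have := hr b (by omega)
      have := hr c (by omega)
      have := hr d (by omega)
      have := h.1 (k + a) (k + b) (k + c) (k + d) (by omega) (by omega) (by omega) (by omega)
      omega
    · have := hr a (by omega)
      have := hr b (by omega)
      have := hr c (by omega)
      have := hr d (by omega)
      have := h.2 (k + a) (k + b) (k + c) (k + d) (by omega) (by omega) (by omega) (by omega)
      omega
  · rintro ⟨ht, hρ⟩
    constructor <;> intro a b c d h1 h2 h3 h4 h'
    · by_cases ha : a < k
      · have hd : d < k := by
          by_contra hd
          have := hlt a ha
          have := hge d (by omega) h4
          have hc : c < k := by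
            by_contra hc
            have := hge c (by omega) (by omega)
            omega
          have := hlt b (by omega)
          omega
        rw [hl a ha, hl b (by omega), hl c (by omega), hl d hd] at h'
        exact ht.1 a b c d h1 h2 h3 hd h'
      · obtain ⟨a, rfl⟩ := Nat.exists_eq_add_of_le (show k ≤ a by omega)
        obtain ⟨b, rfl⟩ := Nat.exists_eq_add_of_le (show k ≤ b by omega)
        obtain ⟨c, rfl⟩ := Nat.exists_eq_add_of_le (show k ≤ c by omega)
        obtain ⟨d, rfl⟩ := Nat.exists_eq_add_of_le (show k ≤ d by omega)
        rw [hr a (by omega), hr b (by omega), hr c (by omega), hr d (by omega)] at h'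
        exact hρ.1 a b c d (by omega) (by omega) (by omega) (by omega) (by omega)
    · by_cases ha : a < k
      · have hd : d < k := by
          by_contra hd
          have := hlt a ha
          have := hge d (by omega) h4
          omega
        rw [hl a ha, hl b (by omega), hl c (by omega), hl d hd] at h'
        exact ht.2 a b c d h1 h2 h3 hd h'
      · obtain ⟨a, rfl⟩ := Nat.exists_eq_add_of_le (show k ≤ a by omega)
        obtain ⟨b, rfl⟩ := Nat.exists_eq_add_of_le (show k ≤ b by omega)
        obtain ⟨c, rfl⟩ := Nat.exists_eq_add_of_le (show k ≤ c by omega)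
        obtain ⟨d, rfl⟩ := Nat.exists_eq_add_of_le (show k ≤ d by omega)
        rw [hr a (by omega), hr b (by omega), hr c (by omega), hr d (by omega)] at h'
        exact hρ.2 a b c d (by omega) (by omega) (by omega) (by omega) (by omega)

/-- `σ` maps the first `j` positions into the first `j` values. -/
def StablePrefix {n : ℕ} (σ : Equiv.Perm (Fin n)) (j : ℕ) : Prop :=
  ∀ i : Fin n, (i : ℕ) < j → (σ i : ℕ) < j

lemma Bplus_eq_iff {n : ℕ} (σ : Equiv.Perm (Fin n)) (m : ℕ) :
    Bplus σ = m ↔ 1 ≤ m ∧ StablePrefix σ m ∧ ∀ j, 1 ≤ j → j < m → ¬ StablePrefix σ j := by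
  have hne : {j | 1 ≤ j ∧ StablePrefix σ j}.Nonempty :=
    ⟨n + 1, by omega, fun i _ => by omega⟩
  constructor
  · rintro rfl
    obtain ⟨h1, h2⟩ := Nat.sInf_mem hne
    exact ⟨h1, h2, fun j hj hjm hs => Nat.notMem_of_lt_sInf hjm ⟨hj, hs⟩⟩
  · rintro ⟨h1, h2, h3⟩
    refine le_antisymm (Nat.sInf_le ⟨h1, h2⟩) (le_csInf hne ?_)
    rintro j ⟨hj, hs⟩
    by_contra hlt
    exact h3 j hj (by omega) hs

lemma Bplus_le {n : ℕ} (hn : 0 < n) (σ : Equiv.Perm (Fin n)) : Bplus σ ≤ n :=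
  Nat.sInf_le ⟨hn, fun i _ => (σ i).2⟩

lemma StablePrefix.le_of_le {n : ℕ} {σ : Equiv.Perm (Fin n)} {j : ℕ} (h : StablePrefix σ j)
    {i : Fin n} (hi : j ≤ i) : j ≤ σ i := by
  by_contra hlt
  push Not at hlt
  have hmaps : Set.MapsTo σ (Finset.univ.filter fun x : Fin n => (x : ℕ) < j)
      (Finset.univ.filter fun x : Fin n => (x : ℕ) < j) := by
    simpa [Set.MapsTo, StablePrefix] using h
  obtain ⟨x, hx, hxi⟩ := Finset.surjOn_of_injOn_of_card_le σ hmaps σ.injective.injOn le_rfl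
    (show σ i ∈ _ by simpa using hlt)
  have := σ.injective hxi
  rw [this] at hx
  simp only [Finset.coe_filter, Finset.mem_univ, true_and, Set.mem_ofPred_eq] at hx
  exact absurd hx (not_lt.2 hi)

lemma isCut_iff {n : ℕ} (σ : Equiv.Perm (Fin n)) (j : ℕ) :
    IsCut (permVal σ) n j ↔ 0 < j ∧ j < n ∧ StablePrefix σ j := by
  refine and_congr_right fun h0 => and_congr_right fun hj => ⟨fun h i hi => ?_, ?_⟩
  · have hsub : (Finset.Iic (σ i)).map σ.symm.toEmbedding ⊆ Finset.Iio (⟨j, hj⟩ : Fin n) := by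
      intro x hx
      simp only [Finset.mem_map, Finset.mem_Iic, Equiv.coe_toEmbedding] at hx
      obtain ⟨y, hy, rfl⟩ := hx
      rw [Finset.mem_Iio]
      by_contra hcon
      have := h i hi (σ.symm y) (not_lt.1 hcon) (σ.symm y).2
      rw [permVal_eq σ i.2, permVal_eq σ (σ.symm y).2] at this
      simp only [Fin.eta, Equiv.apply_symm_apply] at this
      exact absurd hy (not_le.2 this)
    have := Finset.card_le_card hsub
    simp only [Finset.card_map, Fin.card_Iic, Fin.card_Iio] at this
    omega
  · intro h a ha b hb hb'
    have h1 := h ⟨a, by omega⟩ ha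
    have h2 : j ≤ σ ⟨b, hb'⟩ := h.le_of_le hb
    rw [permVal_eq σ (by omega), permVal_eq σ hb']
    omega

lemma Bplus_ne_iff {n : ℕ} (hn : 0 < n) (σ : Equiv.Perm (Fin n)) :
    Bplus σ ≠ n ↔ ∃ j, IsCut (permVal σ) n j := by
  simp only [isCut_iff, Ne, Bplus_eq_iff]
  push Not
  constructor
  · intro h
    exact h hn fun i _ => (σ i).2
  · intro h _ _
    exact h

lemma Bplus_complPerm {n : ℕ} (hn : 2 ≤ n) {σ : Equiv.Perm (Fin n)} (h : Separable σ) :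
    Bplus (complPerm σ) = n ↔ Bplus σ ≠ n := by
  have hv := fun i (hi : i < n) => permVal_complPerm σ hi
  have hiff : ∀ j, IsCut (OrderDual.toDual ∘ permVal σ) n j ↔
      IsCut (permVal (complPerm σ)) n j := by
    intro j
    refine and_congr_right fun _ => and_congr_right fun hj => ?_
    have : ∀ a < j, ∀ b, j ≤ b → b < n →
        (permVal σ b < permVal σ a ↔ permVal (complPerm σ) a < permVal (complPerm σ) b) := by
      intro a ha b hb hbn
      have := hv a (by omega)
      have := hv b (by omega)
      omega
    exact ⟨fun h a ha b hb hbn => (this a ha b hb hbn).1 (h a ha b hb hbn),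
      fun h a ha b hb hbn => (this a ha b hb hbn).2 (h a ha b hb hbn)⟩
  rw [Bplus_ne_iff (by omega), ← not_iff_not, ← Ne, Bplus_ne_iff (by omega)]
  constructor
  · rintro ⟨i, hi0, hin, hi⟩ ⟨j, hj0, hjn, hj⟩
    have h1 := hi 0 hi0 (n - 1) (by omega) (by omega)
    have h2 := hj 0 hj0 (n - 1) (by omega) (by omega)
    have := hv 0 (by omega)
    have := hv (n - 1) (by omega)
    omega
  · intro hno
    obtain ⟨i, hi | hi⟩ := ((separable_iff σ).1 h).exists_isCut n hn fun i j hij hj hv =>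
      absurd (permVal_inj σ (by omega) hj hv) hij.ne
    · exact absurd ⟨i, hi⟩ hno
    · exact ⟨i, (hiff i).1 hi⟩

/-- Nonempty separable permutations. -/
noncomputable def sepPos (n : ℕ) : Finset (Equiv.Perm (Fin n)) :=
  (SEP n).filter fun _ => 0 < n

/-- Nonempty sum indecomposable separable permutations. -/
noncomputable def sepInd (n : ℕ) : Finset (Equiv.Perm (Fin n)) :=
  (sepPos n).filter fun σ => Bplus σ = n

/-- Sum decomposable separable permutations. -/
noncomputable def sepDec (n : ℕ) : Finset (Equiv.Perm (Fin n)) :=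
  (sepPos n).filter fun σ => ¬ Bplus σ = n

lemma mem_sepPos {n : ℕ} {σ : Equiv.Perm (Fin n)} : σ ∈ sepPos n ↔ Separable σ ∧ 0 < n := by
  simp only [sepPos, SEP, Finset.mem_filter, Finset.mem_univ, true_and]

lemma stablePrefix_dsum {k l : ℕ} (τ : Equiv.Perm (Fin k)) (ρ : Equiv.Perm (Fin l)) {j : ℕ}
    (hj : j ≤ k) : StablePrefix (dsum τ ρ) j ↔ StablePrefix τ j := by
  constructor
  · intro h i hi
    have := h (Fin.castAdd l i) hi
    have h2 := permVal_dsum_left τ ρ i.2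
    rw [permVal_eq τ i.2, permVal_eq _ (show (i : ℕ) < k + l by omega)] at h2
    exact h2 ▸ this
  · intro h i hi
    have h1 := h ⟨i, by omega⟩ hi
    have h2 := permVal_dsum_left τ ρ (show (i : ℕ) < k by omega)
    rw [permVal_eq τ (by omega), permVal_eq _ i.2] at h2
    exact h2.symm ▸ h1

lemma Bplus_dsum {k l : ℕ} (τ : Equiv.Perm (Fin k)) (ρ : Equiv.Perm (Fin l)) :
    Bplus (dsum τ ρ) = k ↔ Bplus τ = k := by
  rw [Bplus_eq_iff, Bplus_eq_iff, stablePrefix_dsum τ ρ le_rfl]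
  refine and_congr_right fun _ => and_congr_right fun _ => ?_
  refine forall_congr' fun j => forall_congr' fun _ => forall_congr' fun hj => ?_
  rw [stablePrefix_dsum τ ρ hj.le]

lemma StablePrefix.exists_dsum {k l : ℕ} {σ : Equiv.Perm (Fin (k + l))}
    (h : StablePrefix σ k) : ∃ τ ρ, dsum (l := l) τ ρ = σ := by
  have hmaps : Set.MapsTo (finSumFinEquiv.symm.permCongr σ) (Set.range Sum.inl)
      (Set.range (Sum.inl : Fin k → Fin k ⊕ Fin l)) := by
    rintro _ ⟨i, rfl⟩
    have := h (Fin.castAdd l i) i.2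
    refine ⟨⟨σ (Fin.castAdd l i), this⟩, ?_⟩
    rw [Equiv.permCongr_apply, Equiv.eq_symm_apply]
    rfl
  obtain ⟨⟨τ, ρ⟩, hτρ⟩ := Equiv.Perm.mem_sumCongrHom_range_of_perm_mapsTo_inl hmaps
  refine ⟨τ, ρ, ?_⟩
  have : Equiv.Perm.sumCongr τ ρ = finSumFinEquiv.symm.permCongr σ := hτρ
  rw [dsum, this]
  ext i
  simp [Equiv.permCongr_apply]

lemma dsum_injective {k l : ℕ} {τ τ' : Equiv.Perm (Fin k)} {ρ ρ' : Equiv.Perm (Fin l)}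
    (h : dsum τ ρ = dsum τ' ρ') : τ = τ' ∧ ρ = ρ' := by
  have h' : Equiv.Perm.sumCongrHom (Fin k) (Fin l) (τ, ρ) =
      Equiv.Perm.sumCongrHom (Fin k) (Fin l) (τ', ρ') :=
    finSumFinEquiv.permCongr.injective h
  exact Prod.ext_iff.1 (Equiv.Perm.sumCongrHom_injective h')

lemma sum_sepDec_filter (F : ∀ n, Equiv.Perm (Fin n) → ℝ) (k l : ℕ) :
    ∑ σ ∈ (sepDec (k + l)).filter (fun σ => Bplus σ = k), F (k + l) σ =
      ∑ τ ∈ sepInd k, ∑ ρ ∈ sepPos l, F (k + l) (dsum τ ρ) := by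
  rw [← Finset.sum_product']
  symm
  refine Finset.sum_nbij (fun p => dsum p.1 p.2) ?_ ?_ ?_ fun _ _ => rfl
  · rintro ⟨τ, ρ⟩ hp
    simp only [Finset.mem_product, sepInd, sepDec, Finset.mem_filter, mem_sepPos] at hp ⊢
    have := (Bplus_dsum τ ρ).2 hp.1.2
    exact ⟨⟨⟨(separable_dsum τ ρ).2 ⟨hp.1.1.1, hp.2.1⟩, by omega⟩, by omega⟩, this⟩
  · rintro ⟨τ, ρ⟩ - ⟨τ', ρ'⟩ - h
    obtain ⟨rfl, rfl⟩ := dsum_injective h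
    rfl
  · intro σ hσ
    simp only [Finset.coe_filter, sepDec, Finset.mem_filter, mem_sepPos, Set.mem_ofPred_eq] at hσ
    obtain ⟨⟨⟨hs, hn⟩, hne⟩, hk⟩ := hσ
    obtain ⟨h1, h2, -⟩ := (Bplus_eq_iff σ k).1 hk
    obtain ⟨τ, ρ, rfl⟩ := h2.exists_dsum
    have hsep := (separable_dsum τ ρ).1 hs
    refine ⟨(τ, ρ), ?_, rfl⟩
    simp only [Finset.coe_product, Set.mem_prod, Finset.mem_coe, sepInd, Finset.mem_filter,
      mem_sepPos]
    exact ⟨⟨⟨hsep.1, h1⟩, (Bplus_dsum τ ρ).1 hk⟩, hsep.2, by omega⟩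

/-- A sum decomposable separable permutation is uniquely the direct sum of its first block and a
nonempty separable permutation. -/
lemma sum_sepDec (F : ∀ n, Equiv.Perm (Fin n) → ℝ) (n : ℕ) :
    ∑ σ ∈ sepDec n, F n σ =
      ∑ p ∈ antidiagonal n, ∑ τ ∈ sepInd p.1, ∑ ρ ∈ sepPos p.2, F (p.1 + p.2) (dsum τ ρ) := by
  rw [← Finset.sum_fiberwise_of_maps_to (t := antidiagonal n)
    (g := fun σ => (Bplus σ, n - Bplus σ))]
  · refine Finset.sum_congr rfl ?_
    rintro ⟨k, l⟩ hkl
    obtain rfl := HasAntidiagonal.mem_antidiagonal.1 hkl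
    rw [← sum_sepDec_filter]
    refine Finset.sum_congr (Finset.filter_congr fun σ _ => ?_) fun _ _ => rfl
    simp only [Prod.mk.injEq]
    omega
  · intro σ hσ
    have := Bplus_le (mem_sepPos.1 (Finset.mem_filter.1 hσ).1).2 σ
    rw [HasAntidiagonal.mem_antidiagonal]
    simp only
    omega

lemma sum_sepPos (F : ∀ n, Equiv.Perm (Fin n) → ℝ) (n : ℕ) :
    ∑ σ ∈ sepPos n, F n σ = ∑ σ ∈ sepInd n, F n σ + ∑ σ ∈ sepDec n, F n σ :=
  (Finset.sum_filter_add_sum_filter_not _ _ _).symm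

lemma sum_sepPos_complPerm (F : ∀ n, Equiv.Perm (Fin n) → ℝ) (n : ℕ) :
    ∑ σ ∈ sepPos n, F n (complPerm σ) = ∑ σ ∈ sepPos n, F n σ := by
  refine Finset.sum_nbij' complPerm complPerm ?_ ?_ (fun _ _ => complPerm_complPerm _)
    (fun _ _ => complPerm_complPerm _) fun _ _ => rfl <;>
  · intro σ hσ
    rw [mem_sepPos] at hσ ⊢
    exact ⟨hσ.1.complPerm, hσ.2⟩

lemma sum_sepInd_complPerm (F : ∀ n, Equiv.Perm (Fin n) → ℝ) {n : ℕ} (hn : n ≠ 1) :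
    ∑ σ ∈ sepInd n, F n (complPerm σ) = ∑ σ ∈ sepDec n, F n σ := by
  refine Finset.sum_nbij' complPerm complPerm ?_ ?_ (fun _ _ => complPerm_complPerm _)
    (fun _ _ => complPerm_complPerm _) fun _ _ => rfl
  · intro σ hσ
    simp only [sepInd, sepDec, Finset.mem_filter, mem_sepPos] at hσ ⊢
    refine ⟨⟨hσ.1.1.complPerm, hσ.1.2⟩, ?_⟩
    rw [Bplus_complPerm (by omega) hσ.1.1]
    exact not_not.2 hσ.2
  · intro σ hσ
    simp only [sepInd, sepDec, Finset.mem_filter, mem_sepPos] at hσ ⊢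
    exact ⟨⟨hσ.1.1.complPerm, hσ.1.2⟩, (Bplus_complPerm (by omega) hσ.1.1).2 hσ.2⟩

lemma desc_dsum_left {k l : ℕ} (τ : Equiv.Perm (Fin k)) (ρ : Equiv.Perm (Fin l)) {i : ℕ}
    (h : i < k) : Desc (dsum τ ρ) i ↔ Desc τ i := by
  rw [desc_iff, desc_iff, permVal_dsum_left τ ρ h]
  rcases Nat.lt_or_ge (i + 1) k with h' | h'
  · rw [permVal_dsum_left τ ρ h']
    omega
  · have := permVal_lt τ h
    obtain rfl : k = i + 1 := by omega
    refine ⟨fun h1 => ?_, fun h1 => by omega⟩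
    have := permVal_dsum_right τ ρ (j := 0) (by omega)
    rw [add_zero] at this
    omega

lemma desc_dsum_right {k l : ℕ} (τ : Equiv.Perm (Fin k)) (ρ : Equiv.Perm (Fin l)) (j : ℕ) :
    Desc (dsum τ ρ) (k + j) ↔ Desc ρ j := by
  rw [desc_iff, desc_iff, add_assoc, Nat.add_lt_add_iff_left]
  refine and_congr_right fun h => ?_
  rw [permVal_dsum_right τ ρ h, permVal_dsum_right τ ρ (by omega)]
  omega

lemma asc_dsum_left {k l : ℕ} (τ : Equiv.Perm (Fin k)) (ρ : Equiv.Perm (Fin l)) {i : ℕ}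
    (h : i + 1 < k) : Asc (dsum τ ρ) i ↔ Asc τ i := by
  rw [asc_iff, asc_iff, permVal_dsum_left τ ρ h, permVal_dsum_left τ ρ (by omega)]
  omega

lemma asc_dsum_right {k l : ℕ} (τ : Equiv.Perm (Fin k)) (ρ : Equiv.Perm (Fin l)) (j : ℕ) :
    Asc (dsum τ ρ) (k + j) ↔ Asc ρ j := by
  rw [asc_iff, asc_iff, add_assoc, Nat.add_lt_add_iff_left]
  refine and_congr_right fun h => ?_
  rw [permVal_dsum_right τ ρ h, permVal_dsum_right τ ρ (by omega)]
  omega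

lemma asc_dsum_junction {k l : ℕ} (τ : Equiv.Perm (Fin (k + 1))) (ρ : Equiv.Perm (Fin l))
    (h : 0 < l) : Asc (dsum τ ρ) k := by
  rw [asc_iff, permVal_dsum_left τ ρ (by omega)]
  have h1 := permVal_dsum_right τ ρ h
  have h2 := permVal_lt τ (show k < k + 1 by omega)
  rw [add_zero] at h1
  omega

lemma runs_desc_dsum {k l : ℕ} (τ : Equiv.Perm (Fin k)) (ρ : Equiv.Perm (Fin l)) :
    runs (Desc (dsum τ ρ)) (k + l) = runs (Desc τ) k + runs (Desc ρ) l := by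
  unfold runs
  rw [Finset.sum_range_add]
  congr 1
  · refine Finset.sum_congr rfl fun i hi => ?_
    rw [mem_range] at hi
    rw [desc_dsum_left τ ρ hi, desc_dsum_left τ ρ (show i - 1 < k by omega)]
  · refine Finset.sum_congr rfl fun j _ => ?_
    rw [desc_dsum_right]
    rcases j with - | j
    · rcases k with - | k
      · simp
      · have : ¬ Desc (dsum τ ρ) k := by
          rw [desc_dsum_left τ ρ (by omega)]
          rintro ⟨h, -⟩
          omega
        simp [this]
    · rw [show k + (j + 1) - 1 = k + j by omega, desc_dsum_right]
      simp

lemma runs_asc_dsum {k l : ℕ} (hk : 0 < k) (hl : 0 < l) (τ : Equiv.Perm (Fin k))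
    (ρ : Equiv.Perm (Fin l)) :
    runs (Asc (dsum τ ρ)) (k + l) + (if 2 ≤ k ∧ Asc τ (k - 2) then 1 else 0) +
      (if Asc ρ 0 then 1 else 0) = runs (Asc τ) k + runs (Asc ρ) l + 1 := by
  obtain ⟨k, rfl⟩ : ∃ m, k = m + 1 := ⟨k - 1, by omega⟩
  obtain ⟨l, rfl⟩ : ∃ m, l = m + 1 := ⟨l - 1, by omega⟩
  have hj := asc_dsum_junction τ ρ hl
  have h1 : runs (Asc τ) (k + 1) = runs (Asc (dsum τ ρ)) k := by
    rw [runs_succ, if_neg, add_zero]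
    · unfold runs
      refine Finset.sum_congr rfl fun i hi => ?_
      rw [mem_range] at hi
      rw [asc_dsum_left τ ρ (by omega), asc_dsum_left τ ρ (show i - 1 + 1 < k + 1 by omega)]
    · rintro ⟨⟨h, -⟩, -⟩
      omega
  have h2 : runs (Asc (dsum τ ρ)) (k + 1) + (if 2 ≤ k + 1 ∧ Asc τ (k + 1 - 2) then 1 else 0) =
      runs (Asc (dsum τ ρ)) k + 1 := by
    rw [runs_succ, add_assoc]
    congr 1
    rcases k with - | k
    · simp [hj]
    · simp only [Nat.add_sub_cancel, asc_dsum_left τ ρ (show k + 1 < k + 1 + 1 by omega)]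
      rw [show k + 1 + 1 - 2 = k by omega]
      by_cases h : Asc τ k <;> simp [h, hj]
  have h3 : runs (Asc (dsum τ ρ)) (k + 1 + (l + 1)) + (if Asc ρ 0 then 1 else 0) =
      runs (Asc (dsum τ ρ)) (k + 1) + runs (Asc ρ) (l + 1) := by
    unfold runs
    rw [Finset.sum_range_add, add_assoc]
    congr 1
    rw [Finset.sum_range_succ', Finset.sum_range_succ']
    simp only [asc_dsum_right]
    congr 1
    · rw [if_neg (by simp [hj]), add_zero]
      refine Finset.sum_congr rfl fun j _ => ?_
      rw [show k + 1 + (j + 1) - 1 = k + 1 + j by omega, asc_dsum_right]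
      simp
    · simp
  omega

/-- The number of maximal descending runs of length at least two. -/
noncomputable def descRuns (n : ℕ) (σ : Equiv.Perm (Fin n)) : ℝ := runs (Desc σ) n

/-- The number of maximal ascending runs of length at least two. -/
noncomputable def ascRuns (n : ℕ) (σ : Equiv.Perm (Fin n)) : ℝ := runs (Asc σ) n

/-- The indicator of starting with an ascent. -/
noncomputable def startAsc (n : ℕ) (σ : Equiv.Perm (Fin n)) : ℝ := if Asc σ 0 then 1 else 0

/-- The indicator of ending with an ascent. -/
noncomputable def endAsc (n : ℕ) (σ : Equiv.Perm (Fin n)) : ℝ :=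
  if 2 ≤ n ∧ Asc σ (n - 2) then 1 else 0

/-- The constant statistic. -/
noncomputable def oneStat (n : ℕ) (_ : Equiv.Perm (Fin n)) : ℝ := 1

lemma descRuns_dsum {k l : ℕ} (τ : Equiv.Perm (Fin k)) (ρ : Equiv.Perm (Fin l)) :
    descRuns (k + l) (dsum τ ρ) = descRuns k τ + descRuns l ρ := by
  simp only [descRuns, runs_desc_dsum, Nat.cast_add]

lemma ascRuns_dsum {k l : ℕ} (hk : 0 < k) (hl : 0 < l) (τ : Equiv.Perm (Fin k))
    (ρ : Equiv.Perm (Fin l)) :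
    ascRuns (k + l) (dsum τ ρ) + endAsc k τ + startAsc l ρ = ascRuns k τ + ascRuns l ρ + 1 := by
  unfold ascRuns endAsc startAsc
  exact_mod_cast runs_asc_dsum hk hl τ ρ

lemma endAsc_dsum {k l : ℕ} (hk : 0 < k) (hl : 0 < l) (τ : Equiv.Perm (Fin k))
    (ρ : Equiv.Perm (Fin l)) :
    endAsc (k + l) (dsum τ ρ) = endAsc l ρ + if l = 1 then 1 else 0 := by
  obtain ⟨k, rfl⟩ : ∃ m, k = m + 1 := ⟨k - 1, by omega⟩
  unfold endAsc
  rcases Nat.lt_or_ge 1 l with h | h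
  · rw [show k + 1 + l - 2 = k + 1 + (l - 2) by omega, asc_dsum_right]
    simp only [show l ≠ 1 by omega, if_false, add_zero, show 2 ≤ l by omega,
      show 2 ≤ k + 1 + l by omega]
  · obtain rfl : l = 1 := by omega
    simp [asc_dsum_junction τ ρ hl]

lemma descRuns_complPerm (n : ℕ) (σ : Equiv.Perm (Fin n)) :
    descRuns n (complPerm σ) = ascRuns n σ := by
  simp only [descRuns, ascRuns, runs, desc_complPerm]

lemma ascRuns_complPerm (n : ℕ) (σ : Equiv.Perm (Fin n)) :
    ascRuns n (complPerm σ) = descRuns n σ := by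
  simp only [descRuns, ascRuns, runs, asc_complPerm]

lemma startAsc_complPerm {n : ℕ} (hn : 2 ≤ n) (σ : Equiv.Perm (Fin n)) :
    startAsc n (complPerm σ) = 1 - startAsc n σ := by
  simp only [startAsc, asc_complPerm, asc_iff_not_desc σ (show 0 + 1 < n by omega)]
  by_cases h : Desc σ 0 <;> simp [h]

lemma endAsc_complPerm {n : ℕ} (hn : 2 ≤ n) (σ : Equiv.Perm (Fin n)) :
    endAsc n (complPerm σ) = 1 - endAsc n σ := by
  simp only [endAsc, asc_complPerm, asc_iff_not_desc σ (show n - 2 + 1 < n by omega)]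
  by_cases h : Desc σ (n - 2) <;> simp [h, hn]

lemma descRuns_one (σ : Equiv.Perm (Fin 1)) : descRuns 1 σ = 0 := by
  have : ¬ Desc σ 0 := fun ⟨h, _⟩ => by omega
  simp [descRuns, runs, this]

lemma ascRuns_one (σ : Equiv.Perm (Fin 1)) : ascRuns 1 σ = 0 := by
  rw [← descRuns_complPerm, descRuns_one]

lemma startAsc_one (σ : Equiv.Perm (Fin 1)) : startAsc 1 σ = 0 :=
  if_neg fun ⟨h, _⟩ => by omega

lemma endAsc_one (σ : Equiv.Perm (Fin 1)) : endAsc 1 σ = 0 := if_neg fun h => by omega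

/-- The sum of a statistic over nonempty separable permutations. -/
noncomputable def totPos (F : ∀ n, Equiv.Perm (Fin n) → ℝ) (n : ℕ) : ℝ := ∑ σ ∈ sepPos n, F n σ

/-- The sum of a statistic over indecomposable separable permutations. -/
noncomputable def totInd (F : ∀ n, Equiv.Perm (Fin n) → ℝ) (n : ℕ) : ℝ := ∑ σ ∈ sepInd n, F n σ

/-- The sum of a statistic over decomposable separable permutations. -/
noncomputable def totDec (F : ∀ n, Equiv.Perm (Fin n) → ℝ) (n : ℕ) : ℝ := ∑ σ ∈ sepDec n, F n σ

/-- The convolution of two sequences. -/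
noncomputable def conv (a b : ℕ → ℝ) (n : ℕ) : ℝ := ∑ p ∈ antidiagonal n, a p.1 * b p.2

/-- The coefficients of the power series `t`. -/
noncomputable def delta (n : ℕ) : ℝ := if n = 1 then 1 else 0

lemma sepPos_one : sepPos 1 = {1} := by
  ext σ
  rw [mem_sepPos, Finset.mem_singleton, separable_iff]
  refine ⟨fun _ => Subsingleton.elim _ _, fun _ => ⟨⟨?_, ?_⟩, one_pos⟩⟩ <;>
  · intros
    omega

lemma sepDec_one : sepDec 1 = ∅ := by
  refine Finset.filter_eq_empty_iff.2 fun σ _ => not_not.2 ?_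
  exact (Bplus_eq_iff σ 1).2 ⟨le_rfl, fun i _ => (σ i).2, fun j hj hj' => by omega⟩

lemma sepPos_zero : sepPos 0 = ∅ := by simp [sepPos]

lemma totPos_zero (F : ∀ n, Equiv.Perm (Fin n) → ℝ) : totPos F 0 = 0 := by
  simp [totPos, sepPos_zero]

lemma totInd_zero (F : ∀ n, Equiv.Perm (Fin n) → ℝ) : totInd F 0 = 0 := by
  simp [totInd, sepInd, sepPos_zero]

lemma totDec_one (F : ∀ n, Equiv.Perm (Fin n) → ℝ) : totDec F 1 = 0 := by
  simp [totDec, sepDec_one]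

lemma totPos_one (F : ∀ n, Equiv.Perm (Fin n) → ℝ) : totPos F 1 = F 1 1 := by
  simp [totPos, sepPos_one]

lemma totPos_eq_add (F : ∀ n, Equiv.Perm (Fin n) → ℝ) (n : ℕ) :
    totPos F n = totInd F n + totDec F n := sum_sepPos F n

lemma totInd_one (F : ∀ n, Equiv.Perm (Fin n) → ℝ) : totInd F 1 = F 1 1 := by
  have := totPos_eq_add F 1
  rw [totDec_one, totPos_one] at this
  linarith

lemma totDec_of_dsum {F F₁ F₂ : ∀ n, Equiv.Perm (Fin n) → ℝ}
    (h : ∀ k l (τ : Equiv.Perm (Fin k)) (ρ : Equiv.Perm (Fin l)), 0 < k → 0 < l →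
      F (k + l) (dsum τ ρ) = F₁ k τ + F₂ l ρ) (n : ℕ) :
    totDec F n = conv (totInd F₁) (totPos oneStat) n + conv (totInd oneStat) (totPos F₂) n := by
  rw [totDec, sum_sepDec, conv, conv, ← Finset.sum_add_distrib]
  refine Finset.sum_congr rfl fun p _ => ?_
  simp only [totInd, totPos, Finset.sum_mul_sum, ← Finset.sum_add_distrib, oneStat, mul_one,
    one_mul]
  refine Finset.sum_congr rfl fun τ hτ => Finset.sum_congr rfl fun ρ hρ => ?_
  exact h _ _ τ ρ (mem_sepPos.1 (Finset.mem_filter.1 hτ).1).2 (mem_sepPos.1 hρ).2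

lemma totDec_oneStat (n : ℕ) :
    totDec oneStat n = conv (totInd oneStat) (totPos oneStat) n := by
  rw [totDec_of_dsum (F₁ := fun _ _ => 0) (F₂ := oneStat) fun _ _ _ _ _ _ => by simp [oneStat]]
  simp [conv, totInd]

lemma totInd_oneStat (n : ℕ) : totInd oneStat n = totDec oneStat n + delta n := by
  by_cases hn : n = 1
  · subst hn
    simp [totInd_one, totDec_one, oneStat, delta]
  · have := sum_sepInd_complPerm oneStat hn
    simp only [delta, hn, if_false, add_zero]
    exact this

lemma totDec_descRuns (n : ℕ) : totDec descRuns n =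
    conv (totInd descRuns) (totPos oneStat) n + conv (totInd oneStat) (totPos descRuns) n :=
  totDec_of_dsum (fun _ _ τ ρ _ _ => descRuns_dsum τ ρ) n

lemma totInd_descRuns (n : ℕ) : totInd descRuns n = totDec ascRuns n := by
  by_cases hn : n = 1
  · subst hn
    rw [totInd_one, totDec_one, descRuns_one]
  · have := sum_sepInd_complPerm ascRuns hn
    simpa only [ascRuns_complPerm, totInd, totDec, totPos] using this

lemma totInd_ascRuns (n : ℕ) : totInd ascRuns n = totDec descRuns n := by
  by_cases hn : n = 1
  · subst hn
    rw [totInd_one, totDec_one, ascRuns_one]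
  · have := sum_sepInd_complPerm descRuns hn
    simpa only [descRuns_complPerm, totInd, totDec, totPos] using this

lemma totPos_ascRuns (n : ℕ) : totPos ascRuns n = totPos descRuns n := by
  have := sum_sepPos_complPerm descRuns n
  simpa only [descRuns_complPerm, totInd, totDec, totPos] using this

lemma totDec_ascRuns (n : ℕ) :
    totDec ascRuns n + conv (totInd endAsc) (totPos oneStat) n +
      conv (totInd oneStat) (totPos startAsc) n =
    conv (totInd ascRuns) (totPos oneStat) n + conv (totInd oneStat) (totPos ascRuns) n +
      conv (totInd oneStat) (totPos oneStat) n := by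
  rw [totDec_of_dsum (F₁ := fun n σ => ascRuns n σ - endAsc n σ)
    (F₂ := fun n σ => ascRuns n σ - startAsc n σ + oneStat n σ) fun k l τ ρ hk hl => by
      have := ascRuns_dsum hk hl τ ρ
      simp only [oneStat]
      linarith]
  simp only [conv, ← Finset.sum_add_distrib]
  refine Finset.sum_congr rfl fun p _ => ?_
  simp only [totInd, totPos, Finset.sum_sub_distrib, Finset.sum_add_distrib]
  ring

lemma two_mul_totPos_of_complPerm {F : ∀ n, Equiv.Perm (Fin n) → ℝ} (h1 : ∀ σ, F 1 σ = 0)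
    (h : ∀ n, 2 ≤ n → ∀ σ, F n (complPerm σ) = 1 - F n σ) (n : ℕ) :
    2 * totPos F n + delta n = totPos oneStat n := by
  rcases Nat.lt_or_ge n 2 with hn | hn
  · interval_cases n
    · simp [totPos_zero, delta]
    · simp [totPos_one, h1, delta, oneStat]
  · have := sum_sepPos_complPerm F n
    simp only [h n hn, Finset.sum_sub_distrib] at this
    simp only [totPos, oneStat, delta, show n ≠ 1 by omega, if_false]
    linarith

lemma totDec_endAsc (n : ℕ) : totDec endAsc n =
    conv (totInd oneStat) (totPos endAsc) n + conv (totInd oneStat) delta n := by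
  rw [totDec_of_dsum (F₁ := fun _ _ => 0)
    (F₂ := fun n σ => endAsc n σ + if n = 1 then 1 else 0) fun k l τ ρ hk hl => by
      rw [endAsc_dsum hk hl, zero_add]]
  simp only [conv, ← Finset.sum_add_distrib]
  refine Finset.sum_congr rfl fun p _ => ?_
  have : ∑ _σ ∈ sepPos p.2, (if p.2 = 1 then (1 : ℝ) else 0) = delta p.2 := by
    by_cases hp : p.2 = 1
    · rw [hp, sepPos_one]
      simp [delta]
    · simp [hp, delta]
  simp only [totInd, totPos, Finset.sum_add_distrib, this, Finset.sum_const_zero]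
  ring

lemma sum_conv_le {a b : ℕ → ℝ} (ha : ∀ n, 0 ≤ a n) (hb : ∀ n, 0 ≤ b n) (ha0 : a 0 = 0)
    (hb0 : b 0 = 0) {x : ℝ} (hx : 0 ≤ x) (N : ℕ) :
    ∑ n ∈ range (N + 1), conv a b n * x ^ n ≤
      (∑ n ∈ range N, a n * x ^ n) * ∑ n ∈ range N, b n * x ^ n := by
  have hnn : ∀ p : ℕ × ℕ, 0 ≤ a p.1 * x ^ p.1 * (b p.2 * x ^ p.2) := fun p =>
    mul_nonneg (mul_nonneg (ha _) (pow_nonneg hx _)) (mul_nonneg (hb _) (pow_nonneg hx _))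
  rw [Finset.sum_mul_sum, ← Finset.sum_product']
  refine le_trans (le_of_eq ?_) (Finset.sum_fiberwise_le_sum_of_sum_fiber_nonneg
    (t := range (N + 1)) (g := fun p => p.1 + p.2) fun _ _ => Finset.sum_nonneg fun p _ => hnn p)
  refine Finset.sum_congr rfl fun n hn => ?_
  have hsub : (range N ×ˢ range N).filter (fun p => p.1 + p.2 = n) ⊆ antidiagonal n :=
    fun p hp => HasAntidiagonal.mem_antidiagonal.2 (Finset.mem_filter.1 hp).2
  rw [Finset.sum_subset hsub, conv, Finset.sum_mul]
  · refine Finset.sum_congr rfl fun p hp => ?_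
    rw [← HasAntidiagonal.mem_antidiagonal.1 hp, pow_add]
    ring
  · intro p hp hp'
    have hpn := HasAntidiagonal.mem_antidiagonal.1 hp
    simp only [Finset.mem_filter, Finset.mem_product, mem_range, hpn, and_true] at hp' hn
    have : p.1 = 0 ∨ p.2 = 0 := by omega
    rcases this with h | h <;> simp [h, ha0, hb0]

lemma totInd_oneStat_nonneg (n : ℕ) : 0 ≤ totInd oneStat n :=
  Finset.sum_nonneg fun _ _ => zero_le_one

lemma totPos_oneStat_nonneg (n : ℕ) : 0 ≤ totPos oneStat n :=
  Finset.sum_nonneg fun _ _ => zero_le_one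

lemma sum_delta_le {x : ℝ} (hx : 0 ≤ x) (N : ℕ) : ∑ n ∈ range N, delta n * x ^ n ≤ x := by
  have h : ∀ n ∈ range N, delta n * x ^ n = if n = 1 then x else 0 := by
    intro n _
    by_cases hn : n = 1 <;> simp [delta, hn]
  rw [Finset.sum_congr rfl h, Finset.sum_ite_eq']
  split_ifs
  exacts [le_rfl, hx]

lemma sum_totDec_le (N : ℕ) :
    ∑ n ∈ range N, totDec oneStat n * (3 - 2 * √2) ^ n ≤ 3 * √2 / 2 - 2 := by
  have h2 : √2 ^ 2 = 2 := Real.sq_sqrt (by norm_num)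
  have h3 : (4 / 3 : ℝ) ≤ √2 := Real.le_sqrt_of_sq_le (by norm_num)
  have h4 : √2 ≤ 3 / 2 := Real.sqrt_le_iff.2 ⟨by norm_num, by norm_num⟩
  have hr : 0 ≤ 3 - 2 * √2 := by linarith
  induction N with
  | zero =>
    simp only [range_zero, Finset.sum_empty]
    linarith
  | succ N ih =>
    have hI : ∑ n ∈ range N, totInd oneStat n * (3 - 2 * √2) ^ n ≤ 1 - √2 / 2 := by
      simp only [totInd_oneStat, add_mul, Finset.sum_add_distrib]
      have := sum_delta_le hr N
      linarith
    have hS : ∑ n ∈ range N, totPos oneStat n * (3 - 2 * √2) ^ n ≤ √2 - 1 := by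
      simp only [totPos_eq_add, add_mul, Finset.sum_add_distrib]
      linarith
    simp only [totDec_oneStat]
    refine (sum_conv_le totInd_oneStat_nonneg totPos_oneStat_nonneg (totInd_zero _)
      (totPos_zero _) hr N).trans ?_
    refine (mul_le_mul hI hS (Finset.sum_nonneg fun n _ =>
      mul_nonneg (totPos_oneStat_nonneg n) (pow_nonneg hr n)) (by linarith)).trans ?_
    nlinarith

lemma sum_totPos_le (N : ℕ) :
    ∑ n ∈ range N, totPos oneStat n * (3 - 2 * √2) ^ n ≤ √2 - 1 := by
  have h2 : √2 ^ 2 = 2 := Real.sq_sqrt (by norm_num)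
  have hr : 0 ≤ 3 - 2 * √2 := by nlinarith [Real.sqrt_nonneg 2]
  simp only [totPos_eq_add, totInd_oneStat, add_mul, Finset.sum_add_distrib]
  have := sum_delta_le hr N
  have := sum_totDec_le N
  linarith

lemma summable_sizeBound {t : ℝ} (ht : |t| < 3 - 2 * √2) :
    Summable fun n : ℕ => n * totPos oneStat n * |t| ^ n := by
  have hr : 0 < 3 - 2 * √2 := (abs_nonneg t).trans_lt ht
  have hq : ‖|t| / (3 - 2 * √2)‖ < 1 := by
    rw [Real.norm_of_nonneg (by positivity), div_lt_one hr]
    exact ht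
  have hs := (summable_pow_mul_geometric_of_norm_lt_one 1 hq).mul_left (√2 - 1)
  refine Summable.of_nonneg_of_le (fun n => by have := totPos_oneStat_nonneg n; positivity)
    (fun n => ?_) hs
  have hb : totPos oneStat n * (3 - 2 * √2) ^ n ≤ √2 - 1 :=
    (Finset.single_le_sum (f := fun n => totPos oneStat n * (3 - 2 * √2) ^ n)
      (fun i _ => mul_nonneg (totPos_oneStat_nonneg i) (pow_nonneg hr.le i))
      (self_mem_range_succ n)).trans (sum_totPos_le (n + 1))
  calc n * totPos oneStat n * |t| ^ n
      = totPos oneStat n * (3 - 2 * √2) ^ n * (n ^ 1 * (|t| / (3 - 2 * √2)) ^ n) := by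
        rw [div_pow]
        field_simp
    _ ≤ _ := mul_le_mul_of_nonneg_right hb (by positivity)

/-- A statistic whose absolute value is at most the size of the permutation. -/
def SizeBounded (F : ∀ n, Equiv.Perm (Fin n) → ℝ) : Prop :=
  ∀ n (σ : Equiv.Perm (Fin n)), 0 < n → |F n σ| ≤ n

lemma sizeBounded_ite (P : ∀ n, Equiv.Perm (Fin n) → Prop) [∀ n σ, Decidable (P n σ)] :
    SizeBounded fun n σ => if P n σ then 1 else 0 := by
  intro n σ hn
  have : (1 : ℝ) ≤ n := by exact_mod_cast hn
  by_cases h : P n σ <;> simp [h, this]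

lemma sizeBounded_runs (D : ∀ n, Equiv.Perm (Fin n) → ℕ → Prop) :
    SizeBounded fun n σ => runs (D n σ) n := by
  intro n σ _
  rw [Nat.abs_cast]
  exact_mod_cast runs_le _ _

lemma sizeBounded_oneStat : SizeBounded oneStat := by
  intro n σ hn
  rw [oneStat, abs_one]
  exact_mod_cast hn

lemma SizeBounded.abs_sum_le {F : ∀ n, Equiv.Perm (Fin n) → ℝ} (hF : SizeBounded F) {n : ℕ}
    {s : Finset (Equiv.Perm (Fin n))} (hs : s ⊆ sepPos n) :
    |∑ σ ∈ s, F n σ| ≤ n * totPos oneStat n := by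
  refine (Finset.abs_sum_le_sum_abs _ _).trans ((Finset.sum_le_sum_of_subset_of_nonneg hs
    fun _ _ _ => abs_nonneg _).trans ?_)
  rw [totPos, Finset.mul_sum]
  refine Finset.sum_le_sum fun σ hσ => ?_
  simpa [oneStat] using hF n σ (mem_sepPos.1 hσ).2

/-- The generating function of `a` converges absolutely at `t` with value `A`. -/
def HasGenFun (t : ℝ) (a : ℕ → ℝ) (A : ℝ) : Prop :=
  Summable (fun n => ‖a n * t ^ n‖) ∧ ∑' n, a n * t ^ n = A

lemma HasGenFun.unique {t : ℝ} {a b : ℕ → ℝ} {A B : ℝ} (ha : HasGenFun t a A)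
    (hb : HasGenFun t b B) (h : ∀ n, a n = b n) : A = B := by
  rw [← ha.2, ← hb.2, funext h]

lemma HasGenFun.hasSum {t : ℝ} {a : ℕ → ℝ} {A : ℝ} (ha : HasGenFun t a A) :
    HasSum (fun n => a n * t ^ n) A :=
  ha.2 ▸ ha.1.of_norm.hasSum

lemma HasGenFun.add {t : ℝ} {a b : ℕ → ℝ} {A B : ℝ} (ha : HasGenFun t a A)
    (hb : HasGenFun t b B) : HasGenFun t (fun n => a n + b n) (A + B) := by
  simp only [HasGenFun, add_mul]
  exact ⟨Summable.of_nonneg_of_le (fun _ => norm_nonneg _)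
    (fun n => norm_add_le (a n * t ^ n) (b n * t ^ n)) (ha.1.add hb.1),
    (ha.hasSum.add hb.hasSum).tsum_eq⟩

lemma HasGenFun.const_mul {t : ℝ} {a : ℕ → ℝ} {A : ℝ} (ha : HasGenFun t a A) (c : ℝ) :
    HasGenFun t (fun n => c * a n) (c * A) := by
  have h : ∀ n, c * a n * t ^ n = c * (a n * t ^ n) := fun n => mul_assoc _ _ _
  simp only [HasGenFun, h]
  refine ⟨?_, (ha.hasSum.mul_left c).tsum_eq⟩
  simpa only [norm_mul c] using ha.1.mul_left ‖c‖

lemma HasGenFun.conv {t : ℝ} {a b : ℕ → ℝ} {A B : ℝ} (ha : HasGenFun t a A)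
    (hb : HasGenFun t b B) : HasGenFun t (conv a b) (A * B) := by
  have h : ∀ n, _root_.conv a b n * t ^ n =
      ∑ p ∈ antidiagonal n, a p.1 * t ^ p.1 * (b p.2 * t ^ p.2) := by
    intro n
    rw [_root_.conv, Finset.sum_mul]
    refine Finset.sum_congr rfl fun p hp => ?_
    rw [← HasAntidiagonal.mem_antidiagonal.1 hp, pow_add]
    ring
  simp only [HasGenFun, h]
  exact ⟨summable_norm_sum_mul_antidiagonal_of_summable_norm (f := fun n => a n * t ^ n)
    (g := fun n => b n * t ^ n) ha.1 hb.1,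
    by rw [← tsum_mul_tsum_eq_tsum_sum_antidiagonal_of_summable_norm ha.1 hb.1, ha.2, hb.2]⟩

lemma hasGenFun_delta (t : ℝ) : HasGenFun t delta t := by
  have h : ∀ n, delta n * t ^ n = if n = 1 then t else 0 := by
    intro n
    by_cases hn : n = 1 <;> simp [delta, hn]
  simp only [HasGenFun, h]
  exact ⟨summable_of_ne_finset_zero (s := {1}) fun n hn => by simp_all, tsum_ite_eq 1 _⟩

lemma exists_hasGenFun {t : ℝ} (ht : |t| < 3 - 2 * √2) {a : ℕ → ℝ}
    (ha : ∀ n, |a n| ≤ n * totPos oneStat n) : ∃ A, HasGenFun t a A := by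
  refine ⟨_, (summable_sizeBound ht).of_nonneg_of_le (fun _ => norm_nonneg _) (fun n => ?_), rfl⟩
  rw [norm_mul, norm_pow, Real.norm_eq_abs, Real.norm_eq_abs]
  exact mul_le_mul_of_nonneg_right (ha n) (by positivity)

lemma SizeBounded.exists_hasGenFun_totPos {t : ℝ} (ht : |t| < 3 - 2 * √2)
    {F : ∀ n, Equiv.Perm (Fin n) → ℝ} (hF : SizeBounded F) : ∃ A, HasGenFun t (totPos F) A :=
  exists_hasGenFun ht fun _ => hF.abs_sum_le (Finset.Subset.refl _)

lemma SizeBounded.exists_hasGenFun_totInd {t : ℝ} (ht : |t| < 3 - 2 * √2)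
    {F : ∀ n, Equiv.Perm (Fin n) → ℝ} (hF : SizeBounded F) : ∃ A, HasGenFun t (totInd F) A :=
  exists_hasGenFun ht fun _ => hF.abs_sum_le (Finset.filter_subset _ _)

lemma SizeBounded.exists_hasGenFun_totDec {t : ℝ} (ht : |t| < 3 - 2 * √2)
    {F : ∀ n, Equiv.Perm (Fin n) → ℝ} (hF : SizeBounded F) : ∃ A, HasGenFun t (totDec F) A :=
  exists_hasGenFun ht fun _ => hF.abs_sum_le (Finset.filter_subset _ _)

lemma genFun_totPos_le {t S : ℝ} (ht : |t| < 3 - 2 * √2) (hS : HasGenFun t (totPos oneStat) S) :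
    S ≤ √2 - 1 := by
  refine hS.hasSum.summable.hasSum.unique hS.hasSum ▸
    hS.hasSum.summable.tsum_le_of_sum_range_le fun N => ?_
  refine (Finset.sum_le_sum fun n _ => ?_).trans (sum_totPos_le N)
  refine mul_le_mul_of_nonneg_left ?_ (totPos_oneStat_nonneg n)
  calc t ^ n ≤ |t| ^ n := by rw [← abs_pow]; exact le_abs_self _
    _ ≤ _ := pow_le_pow_left₀ (abs_nonneg t) ht.le n

lemma hasGenFun_totInd_descRuns {t : ℝ} (ht : |t| < 3 - 2 * √2) :
    HasGenFun t (totInd descRuns)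
      ((t * (1 - t) / √(t ^ 2 - 6 * t + 1) - t * (1 - t) / 2 -
        (t / 2) * √(t ^ 2 - 6 * t + 1)) / 4) := by
  have hdesc : SizeBounded descRuns := sizeBounded_runs fun _ σ => Desc σ
  have hasc : SizeBounded ascRuns := sizeBounded_runs fun _ σ => Asc σ
  have hstart : SizeBounded startAsc := sizeBounded_ite fun _ σ => Asc σ 0
  have hend : SizeBounded endAsc := sizeBounded_ite fun n σ => 2 ≤ n ∧ Asc σ (n - 2)
  have hδ := hasGenFun_delta t
  obtain ⟨S, hS⟩ := sizeBounded_oneStat.exists_hasGenFun_totPos ht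
  obtain ⟨I, hI⟩ := sizeBounded_oneStat.exists_hasGenFun_totInd ht
  obtain ⟨D, hD⟩ := sizeBounded_oneStat.exists_hasGenFun_totDec ht
  obtain ⟨P, hP⟩ := hdesc.exists_hasGenFun_totPos ht
  obtain ⟨PI, hPI⟩ := hdesc.exists_hasGenFun_totInd ht
  obtain ⟨PD, hPD⟩ := hdesc.exists_hasGenFun_totDec ht
  obtain ⟨Q, hQ⟩ := hasc.exists_hasGenFun_totPos ht
  obtain ⟨QI, hQI⟩ := hasc.exists_hasGenFun_totInd ht
  obtain ⟨QD, hQD⟩ := hasc.exists_hasGenFun_totDec ht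
  obtain ⟨A, hA⟩ := hstart.exists_hasGenFun_totPos ht
  obtain ⟨E, hE⟩ := hend.exists_hasGenFun_totPos ht
  obtain ⟨EI, hEI⟩ := hend.exists_hasGenFun_totInd ht
  obtain ⟨ED, hED⟩ := hend.exists_hasGenFun_totDec ht
  have e1 : S = I + D := hS.unique (hI.add hD) (totPos_eq_add _)
  have e2 : D = I * S := hD.unique (hI.conv hS) totDec_oneStat
  have e3 : I = D + t := hI.unique (hD.add hδ) totInd_oneStat
  have e4 : P = PI + PD := hP.unique (hPI.add hPD) (totPos_eq_add _)
  have e5 : PD = PI * S + I * P := hPD.unique ((hPI.conv hS).add (hI.conv hP)) totDec_descRuns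
  have e6 : PI = QD := hPI.unique hQD totInd_descRuns
  have e7 : QI = PD := hQI.unique hPD totInd_ascRuns
  have e8 : Q = P := hQ.unique hP totPos_ascRuns
  have e9 : QD + EI * S + I * A = QI * S + I * Q + I * S :=
    ((hQD.add (hEI.conv hS)).add (hI.conv hA)).unique
      (((hQI.conv hS).add (hI.conv hQ)).add (hI.conv hS)) totDec_ascRuns
  have e10 : 2 * A + t = S := ((hA.const_mul 2).add hδ).unique hS
    (two_mul_totPos_of_complPerm startAsc_one fun _ hn σ => startAsc_complPerm hn σ)
  have e11 : 2 * E + t = S := ((hE.const_mul 2).add hδ).unique hS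
    (two_mul_totPos_of_complPerm endAsc_one fun _ hn σ => endAsc_complPerm hn σ)
  have e12 : E = EI + ED := hE.unique (hEI.add hED) (totPos_eq_add _)
  have e13 : ED = I * E + I * t := hED.unique ((hI.conv hE).add (hI.conv hδ)) totDec_endAsc
  have hSle := genFun_totPos_le ht hS
  have htr : t < 3 - 2 * √2 := (le_abs_self t).trans_lt ht
  have hpos : 0 < 1 - t - 2 * S := by linarith
  have hI' : I = (S + t) / 2 := by linarith
  have hquad : S ^ 2 + (t - 1) * S + t = 0 := by
    rw [hI'] at e1 e2
    nlinarith
  have hw : √(t ^ 2 - 6 * t + 1) = 1 - t - 2 * S := by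
    rw [show t ^ 2 - 6 * t + 1 = (1 - t - 2 * S) ^ 2 by linear_combination -4 * hquad]
    exact Real.sqrt_sq hpos.le
  have hu : (1 + S) ≠ 0 := by
    intro h
    obtain rfl : S = -1 := by linarith
    linarith
  have hIu : (1 - I) * (1 + S) = 1 := by
    rw [hI']
    linear_combination (-1 / 2) * hquad
  have hPu : P = PI * (1 + S) ^ 2 := by
    linear_combination (-P) * hIu + (1 + S) * (e4 + e5)
  have hIS : I * (1 + S) = S := by linear_combination -e1 - e2
  have hA' : A = (S - t) / 2 := by linarith
  have hE' : E = (S - t) / 2 := by linarith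
  have hEI' : EI = E - I * E - I * t := by linarith
  have hc : I * S - EI * S - I * A = t * S := by
    rw [hEI', hE', hA', hI']
    linear_combination (S + t) / 4 * hquad
  have hPD' : PD = PI * (1 + S) ^ 2 - PI := by linarith
  have hIP : I * P = PI * (1 + S) * S := by
    rw [hPu]
    linear_combination PI * (1 + S) * hIS
  have hmain : PI * (1 + S) * (2 - (1 + S) ^ 2) = t * S := by
    rw [e7, e8, hIP, hPD', ← e6] at e9
    linear_combination e9 + hc
  have hPIw : PI * (1 + S) ^ 2 * (1 - t - 2 * S) = t * S := by
    linear_combination hmain - PI * (1 + S) * hquad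
  have hval : (t * (1 - t) / (1 - t - 2 * S) - t * (1 - t) / 2 - t / 2 * (1 - t - 2 * S)) / 4 =
      PI := by
    have : (1 + S) ^ 2 * (8 * PI * (1 - t - 2 * S)) = (1 + S) ^ 2 *
        (2 * t * (1 - t) - t * (1 - t) * (1 - t - 2 * S) - t * (1 - t - 2 * S) ^ 2) := by
      linear_combination 8 * hPIw - 2 * t * (-2 * S ^ 2 - (3 + t) * S + 1 - t) * hquad
    have := mul_left_cancel₀ (pow_ne_zero 2 hu) this
    field_simp
    linarith
  rw [hw, hval]
  exact hPI

lemma card_mul_indecExp (n : ℕ) :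
    ((SEP (n + 1)).card : ℝ) * indecExp (n + 1) (fun σ => (altTypeLen σ false false : ℝ)) =
      4 * totInd descRuns (n + 1) := by
  have hpos : sepPos (n + 1) = SEP (n + 1) :=
    Finset.filter_true_of_mem fun _ _ => n.succ_pos
  have hind : (SEP (n + 1)).filter (fun σ => Bplus σ = n + 1) = sepInd (n + 1) := by
    rw [sepInd, hpos]
  have hcard : ((SEP (n + 1)).card : ℝ) = totPos oneStat (n + 1) := by
    simp [totPos, oneStat, hpos]
  have hcard' : ((sepInd (n + 1)).card : ℝ) = totInd oneStat (n + 1) := by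
    simp [totInd, oneStat]
  have hsum : ∑ σ ∈ sepInd (n + 1), (altTypeLen σ false false : ℝ) =
      2 * totInd descRuns (n + 1) := by
    rw [totInd, Finset.mul_sum]
    refine Finset.sum_congr rfl fun σ _ => ?_
    rw [altTypeLen_false_false n.succ_pos, descRuns]
    push_cast
    rfl
  rw [indecExp, hind, hcard, hsum]
  rcases n with - | n
  · simp [totInd_one, descRuns_one]
  · have htwo : totPos oneStat (n + 1 + 1) = 2 * totInd oneStat (n + 1 + 1) := by
      have := totInd_oneStat (n + 1 + 1)
      rw [delta, if_neg (by omega), add_zero] at this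
      rw [totPos_eq_add, ← this, two_mul]
    rcases (sepInd (n + 1 + 1)).eq_empty_or_nonempty with h | h
    · simp [totInd, h]
    · have h0 : ((sepInd (n + 1 + 1)).card : ℝ) ≠ 0 :=
        Nat.cast_ne_zero.2 (Finset.card_ne_zero.2 h)
      rw [htwo, ← hcard']
      field_simp
      ring

/-- The generating function
`G^{-,-}(t) = ∑_{n≥1} sₙ cₙ^{-,-} tⁿ = t(1-t)/√(t²-6t+1) - t(1-t)/2 - (t/2)√(t²-6t+1)`
for `|t| < 3 - 2√2`, where `cₙ^{-,-}` is the mean of `Aₙ^{-,-}` over indecomposable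
separable permutations of `[n]`. -/
theorem genfun_G_mm (t : ℝ) (ht : |t| < 3 - 2 * Real.sqrt 2) :
    HasSum (fun n : ℕ => ((SEP (n + 1)).card : ℝ) *
        indecExp (n + 1) (fun σ => (altTypeLen σ false false : ℝ)) * t ^ (n + 1))
      (t * (1 - t) / Real.sqrt (t ^ 2 - 6 * t + 1) - t * (1 - t) / 2 -
        (t / 2) * Real.sqrt (t ^ 2 - 6 * t + 1)) := by
  have h := (hasSum_nat_add_iff' 1).2 ((hasGenFun_totInd_descRuns ht).const_mul 4).hasSum
  rw [mul_div_cancel₀ _ four_ne_zero] at h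
  simp only [Finset.sum_range_one, totInd_zero, mul_zero, zero_mul, sub_zero] at h
  simpa only [card_mul_indecExp] using h
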